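/- arXiv:2105.09037 — 2 statements merged into one kernel-verified Lean document; each statement's English description precedes it below -/
import Mathlib

section
/- Every non-signalling behaviour P with two settings x,y ∈ {0,1} and S_max ≥ 2 decomposes pointwise as a convex mixture P = p·P̄ + (1−p)·P̃ with p = (4 − S_max)/2, where P̄ is a behaviour admitting an LHV+FHV model and P̃ is a PR box (a non-signalling two-setting behaviour whose maximal absolute CHSH value equals 4). -/
/-!
Fix a Boolean matrix `c` of odd parity. It selects one of the expressions `± S i` and the PR box
whose outcomes always satisfy `(a ^^ b) = c x y`. Call a round `(x, y, a, b)` violating this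
constraint an error. Because `c` is odd, each of the eight errors is the only error of some
deterministic local strategy. Weight each such strategy by the probability that `P` gives to its
error, and add the PR box with the remaining weight. The resulting mixture is non-signalling and
has the same error probabilities as `P`. It equals `P`: a difference of two non-signalling
behaviours that vanishes on all errors is constant along the loop
`(x, y) → (x, y') → (x', y') → (x', y)`, which by odd parity returns to `(x, y)` with the outcomes
negated, and since its entries sum to zero at every pair of settings it is zero. When `c` selects
the expression of value `Smax P`, the total error probability is `(4 - Smax P) / 2`.
-/

open scoped BigOperators Classical
open Finset

noncomputable section

/-- The real value `±1` associated with a Boolean outcome. -/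
def outVal (a : Bool) : ℝ := if a then 1 else -1

/-- A behaviour: nonnegative probabilities summing to one for every pair of settings. -/
def IsBehaviour {M N : ℕ} (P : Bool → Bool → Fin M → Fin N → ℝ) : Prop :=
  (∀ a b x y, 0 ≤ P a b x y) ∧ (∀ x y, ∑ a, ∑ b, P a b x y = 1)

/-- The correlator `⟨ab⟩_{xy}`. -/
def corr {M N : ℕ} (P : Bool → Bool → Fin M → Fin N → ℝ) (x : Fin M) (y : Fin N) : ℝ :=
  ∑ a, ∑ b, outVal a * outVal b * P a b x y

/-- Non-signalling for a two-setting behaviour. -/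
def NonSignalling (P : Bool → Bool → Fin 2 → Fin 2 → ℝ) : Prop :=
  (∀ a x y y', ∑ b, P a b x y = ∑ b, P a b x y') ∧
  (∀ b y x x', ∑ a, P a b x y = ∑ a, P a b x' y)

def S1 (P : Bool → Bool → Fin 2 → Fin 2 → ℝ) : ℝ :=
  corr P 0 0 + corr P 0 1 + corr P 1 0 - corr P 1 1

def S2 (P : Bool → Bool → Fin 2 → Fin 2 → ℝ) : ℝ :=
  corr P 0 0 + corr P 0 1 - corr P 1 0 + corr P 1 1

def S3 (P : Bool → Bool → Fin 2 → Fin 2 → ℝ) : ℝ :=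
  corr P 0 0 - corr P 0 1 + corr P 1 0 + corr P 1 1

def S4 (P : Bool → Bool → Fin 2 → Fin 2 → ℝ) : ℝ :=
  -corr P 0 0 + corr P 0 1 + corr P 1 0 + corr P 1 1

/-- Maximal absolute value of the four CHSH expressions. -/
def Smax (P : Bool → Bool → Fin 2 → Fin 2 → ℝ) : ℝ :=
  max (max |S1 P| |S2 P|) (max |S3 P| |S4 P|)

/-- A behaviour admits an LHV+FHV model (is local-free). -/
def LocalFree {M N : ℕ} (P : Bool → Bool → Fin M → Fin N → ℝ) : Prop :=
  ∃ (n : ℕ) (q : Fin n → ℝ) (A : Bool → Fin M → Fin n → ℝ) (B : Bool → Fin N → Fin n → ℝ),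
    (∀ l, 0 ≤ q l) ∧ (∑ l, q l = 1) ∧
    (∀ a x l, 0 ≤ A a x l) ∧ (∀ x l, ∑ a, A a x l = 1) ∧
    (∀ b y l, 0 ≤ B b y l) ∧ (∀ y l, ∑ b, B b y l = 1) ∧
    (∀ a b x y, P a b x y = ∑ l, q l * A a x l * B b y l)

lemma exists_mem_stdSimplex_eq_smul {ι : Type*} [Fintype ι] [Nonempty ι] {w : ι → ℝ}
    (hw : 0 ≤ w) : ∃ q ∈ stdSimplex ℝ ι, w = (∑ i, w i) • q := by
  by_cases h : ∑ i, w i = 0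
  · obtain ⟨q, hq⟩ : (stdSimplex ℝ ι).Nonempty := Set.nonempty_coe_sort.1 inferInstance
    exact ⟨q, hq, by rw [h, zero_smul, (Fintype.sum_eq_zero_iff_of_nonneg hw).1 h]⟩
  · have hsum : 0 ≤ ∑ i, w i := sum_nonneg fun i _ => hw i
    refine ⟨(∑ i, w i)⁻¹ • w, ⟨fun i => mul_nonneg (inv_nonneg.2 hsum) (hw i), ?_⟩,
      (smul_inv_smul₀ h w).symm⟩
    simp only [Pi.smul_apply, smul_eq_mul, ← mul_sum, inv_mul_cancel₀ h]

section CHSH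

variable {c : Fin 2 → Fin 2 → Bool} (P : Bool → Bool → Fin 2 → Fin 2 → ℝ)

/-- An odd number of entries of the matrix is `true`. These are the matrices for which the
constraints `(a ^^ b) = c x y` cannot all be met by a deterministic local strategy. -/
def OddParity (c : Fin 2 → Fin 2 → Bool) : Prop :=
  (c 0 0 ^^ c 0 1 ^^ c 1 0 ^^ c 1 1) = true

/-- The CHSH expression that rewards `(a ^^ b) = c x y`. The sign of a correlator is written
`outVal (!c x y)` because `outVal a * outVal b = outVal (!(a ^^ b))`. For `c` of odd parity these
are the eight expressions `± S i`. -/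
def chsh (c : Fin 2 → Fin 2 → Bool) (P : Bool → Bool → Fin 2 → Fin 2 → ℝ) : ℝ :=
  ∑ x, ∑ y, outVal (!c x y) * corr P x y

lemma outVal_not (a : Bool) : outVal (!a) = -outVal a := by
  cases a <;> simp [outVal]

lemma outVal_mul_self (a : Bool) : outVal a * outVal a = 1 := by
  cases a <;> simp [outVal]

lemma outVal_mul_le_one (a b : Bool) : outVal a * outVal b ≤ 1 := by
  cases a <;> cases b <;> norm_num [outVal]

lemma OddParity.not (hc : OddParity c) : OddParity fun x y => !c x y := by
  simpa [OddParity] using hc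

lemma OddParity.xor_loop (hc : OddParity c) {x x' y y' : Fin 2} (hx : x' ≠ x) (hy : y' ≠ y) :
    (c x y' ^^ (c x' y' ^^ (c x' y ^^ c x y))) = true := by
  fin_cases x <;> fin_cases x' <;> fin_cases y <;> fin_cases y' <;>
    first
    | contradiction
    | simpa only [OddParity, Fin.zero_eta, Fin.mk_one, Fin.isValue, Bool.xor_assoc, Bool.xor_comm,
        Bool.xor_left_comm] using hc

lemma chsh_eq (c : Fin 2 → Fin 2 → Bool) : chsh c P =
    outVal (!c 0 0) * corr P 0 0 + outVal (!c 0 1) * corr P 0 1 +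
      outVal (!c 1 0) * corr P 1 0 + outVal (!c 1 1) * corr P 1 1 := by
  simp only [chsh, Fin.sum_univ_two, add_assoc]

lemma chsh_not (c : Fin 2 → Fin 2 → Bool) : chsh (fun x y => !c x y) P = -chsh c P := by
  simp only [chsh, outVal_not, neg_mul, sum_neg_distrib]

lemma chsh_le_Smax (hc : OddParity c) : chsh c P ≤ Smax P := by
  have h₁ : |S1 P| ≤ Smax P := by simp [Smax]
  have h₂ : |S2 P| ≤ Smax P := by simp [Smax]
  have h₃ : |S3 P| ≤ Smax P := by simp [Smax]
  have h₄ : |S4 P| ≤ Smax P := by simp [Smax]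
  simp only [abs_le, S1, S2, S3, S4] at h₁ h₂ h₃ h₄
  unfold OddParity at hc
  cases h00 : c 0 0 <;> cases h01 : c 0 1 <;> cases h10 : c 1 0 <;> cases h11 : c 1 1 <;>
    simp only [h00, h01, h10, h11, chsh_eq, outVal, Bool.xor_false, Bool.xor_true, Bool.not_false,
      Bool.not_true, Bool.false_eq_true, if_true, if_false] at hc ⊢ <;>
    linarith

lemma exists_chsh_eq_Smax : ∃ c, OddParity c ∧ chsh c P = Smax P := by
  let IsValue (s : ℝ) : Prop := ∃ c, OddParity c ∧ chsh c P = s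
  have isValue_abs (c) (hc : OddParity c) : IsValue |chsh c P| :=
    abs_by_cases IsValue ⟨c, hc, rfl⟩ ⟨_, hc.not, chsh_not P c⟩
  have h₁ : chsh ![![false, false], ![false, true]] P = S1 P := by
    simp [chsh_eq, outVal, S1, sub_eq_add_neg]
  have h₂ : chsh ![![false, false], ![true, false]] P = S2 P := by
    simp [chsh_eq, outVal, S2, sub_eq_add_neg]
  have h₃ : chsh ![![false, true], ![false, false]] P = S3 P := by
    simp [chsh_eq, outVal, S3, sub_eq_add_neg]
  have h₄ : chsh ![![true, false], ![false, false]] P = S4 P := by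
    simp [chsh_eq, outVal, S4]
  exact max_rec' IsValue
    (max_rec' IsValue (h₁ ▸ isValue_abs _ rfl) (h₂ ▸ isValue_abs _ rfl))
    (max_rec' IsValue (h₃ ▸ isValue_abs _ rfl) (h₄ ▸ isValue_abs _ rfl))

end CHSH

section LocalModels

variable {M N : ℕ}

/-- The behaviour of the deterministic local strategy in which the parties answer `α x` and
`β y`. -/
def deterministic (α : Fin M → Bool) (β : Fin N → Bool) (a b : Bool) (x : Fin M) (y : Fin N) : ℝ :=
  (if a = α x then 1 else 0) * (if b = β y then 1 else 0)

lemma sum_deterministic (α : Fin M → Bool) (β : Fin N → Bool) (x : Fin M) (y : Fin N) :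
    ∑ a, ∑ b, deterministic α β a b x y = 1 := by
  simp [deterministic]

lemma nonSignalling_deterministic (α β : Fin 2 → Bool) : NonSignalling (deterministic α β) := by
  simp [NonSignalling, deterministic]

lemma localFree_sum_deterministic {ι : Type*} [Fintype ι] {q : ι → ℝ} (hq : q ∈ stdSimplex ℝ ι)
    (α : ι → Fin M → Bool) (β : ι → Fin N → Bool) :
    LocalFree (∑ i, q i • deterministic (α i) (β i)) := by
  let e := (Fintype.equivFin ι).symm
  refine ⟨Fintype.card ι, q ∘ e, fun a x l => if a = α (e l) x then 1 else 0,
    fun b y l => if b = β (e l) y then 1 else 0, fun l => hq.1 _, (e.sum_comp q).trans hq.2,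
    fun a x l => ?_, fun x l => ?_, fun b y l => ?_, fun y l => ?_, fun a b x y => ?_⟩
  · positivity
  · simp
  · positivity
  · simp
  · simp only [Finset.sum_apply, Pi.smul_apply, smul_eq_mul, deterministic, ← mul_assoc]
    exact (e.sum_comp _).symm

lemma LocalFree.isBehaviour {P : Bool → Bool → Fin M → Fin N → ℝ} (h : LocalFree P) :
    IsBehaviour P := by
  obtain ⟨n, q, A, B, hq, hq1, hA, hA1, hB, hB1, hP⟩ := h
  refine ⟨fun a b x y => ?_, fun x y => ?_⟩
  · rw [hP]
    exact sum_nonneg fun l _ => mul_nonneg (mul_nonneg (hq l) (hA a x l)) (hB b y l)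
  · calc ∑ a, ∑ b, P a b x y = ∑ a, ∑ l, ∑ b, q l * A a x l * B b y l := by
          simp only [hP, sum_comm (s := (univ : Finset Bool)) (t := (univ : Finset (Fin n)))]
      _ = ∑ l, ∑ a, ∑ b, q l * A a x l * B b y l := sum_comm
      _ = ∑ l, q l := by simp only [← mul_sum, hA1, hB1, mul_one]
      _ = 1 := hq1

end LocalModels

section NonSignalling

/-- The signed tables satisfying the non-signalling equations, without positivity or
normalisation. -/
def nonSignallingSubmodule : Submodule ℝ (Bool → Bool → Fin 2 → Fin 2 → ℝ) where
  carrier := {P | NonSignalling P}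
  zero_mem' := by simp [NonSignalling]
  add_mem' {P Q} hP hQ := by
    simp only [Set.mem_ofPred_eq, NonSignalling, Pi.add_apply, sum_add_distrib]
    exact ⟨fun a x y y' => congrArg₂ _ (hP.1 a x y y') (hQ.1 a x y y'),
      fun b y x x' => congrArg₂ _ (hP.2 b y x x') (hQ.2 b y x x')⟩
  smul_mem' r P hP := by
    simp only [Set.mem_ofPred_eq, NonSignalling, Pi.smul_apply, ← smul_sum]
    exact ⟨fun a x y y' => congrArg _ (hP.1 a x y y'), fun b y x x' => congrArg _ (hP.2 b y x x')⟩

variable {c : Fin 2 → Fin 2 → Bool} {P Q : Bool → Bool → Fin 2 → Fin 2 → ℝ}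

lemma NonSignalling.eq_zero_of_error_eq_zero (hc : OddParity c) (hP : NonSignalling P)
    (hsum : ∀ x y, ∑ a, ∑ b, P a b x y = 0)
    (herr : ∀ a b x y, (a ^^ b) ≠ c x y → P a b x y = 0) : P = 0 := by
  have sum_right (a x y) : ∑ b, P a b x y = P a (a ^^ c x y) x y :=
    Fintype.sum_eq_single _ fun b hb => herr a b x y fun h => hb (by simp [← h])
  have sum_left (b x y) : ∑ a, P a b x y = P (b ^^ c x y) b x y :=
    Fintype.sum_eq_single _ fun a ha => herr a b x y fun h => ha (by simp [← h, Bool.xor_comm a])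
  let f (a : Bool) (x y : Fin 2) : ℝ := P a (a ^^ c x y) x y
  have change_y (a x y y') : f a x y = f a x y' := by
    simpa only [sum_right] using hP.1 a x y y'
  have change_x (a x x' y) : f a x y = f (a ^^ c x y ^^ c x' y) x' y :=
    calc f a x y = ∑ a', P a' (a ^^ c x y) x y := by
          simp only [sum_left, f, Bool.xor_assoc, Bool.xor_self, Bool.xor_false]
      _ = ∑ a', P a' (a ^^ c x y) x' y := hP.2 _ y x x'
      _ = f (a ^^ c x y ^^ c x' y) x' y := by
          simp only [sum_left, f, Bool.xor_assoc, Bool.xor_self, Bool.xor_false]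
  have f_not (a x y) : f a x y = f (!a) x y := by
    obtain ⟨x', hx⟩ := exists_ne x
    obtain ⟨y', hy⟩ := exists_ne y
    rw [change_y a x y y', change_x _ x x' y', change_y _ x' y' y, change_x _ x' x y]
    simp only [Bool.xor_assoc, hc.xor_loop hx hy, Bool.xor_true]
  have f_eq_zero (a x y) : f a x y = 0 := by
    have h := hsum x y
    simp only [sum_right, Fintype.sum_bool] at h
    have h' := f_not true x y
    cases a <;> simp only [f, Bool.not_true] at h' ⊢ <;> linarith
  funext a b x y
  by_cases h : (a ^^ b) = c x y
  · simpa [f, ← h] using f_eq_zero a x y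
  · exact herr a b x y h

lemma NonSignalling.ext_of_error (hc : OddParity c) (hP : NonSignalling P) (hQ : NonSignalling Q)
    (hsum : ∀ x y, ∑ a, ∑ b, P a b x y = ∑ a, ∑ b, Q a b x y)
    (herr : ∀ a b x y, (a ^^ b) ≠ c x y → P a b x y = Q a b x y) : P = Q := by
  refine sub_eq_zero.1 <|
    NonSignalling.eq_zero_of_error_eq_zero hc (nonSignallingSubmodule.sub_mem hP hQ) ?_ ?_
  · simpa only [Pi.sub_apply, sum_sub_distrib, sub_eq_zero] using hsum
  · simpa only [Pi.sub_apply, sub_eq_zero] using herr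

end NonSignalling

section PRBox

variable (c : Fin 2 → Fin 2 → Bool)

/-- The PR box with `(a ^^ b) = c x y` and uniform marginals. -/
def prBox (a b : Bool) (x y : Fin 2) : ℝ :=
  if (a ^^ b) = c x y then 1 / 2 else 0

lemma sum_prBox_right (a : Bool) (x y : Fin 2) : ∑ b, prBox c a b x y = 1 / 2 := by
  cases a <;> cases h : c x y <;> simp [prBox, h]

lemma sum_prBox_left (b : Bool) (x y : Fin 2) : ∑ a, prBox c a b x y = 1 / 2 := by
  cases b <;> cases h : c x y <;> simp [prBox, h]

lemma isBehaviour_prBox : IsBehaviour (prBox c) := by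
  refine ⟨fun a b x y => ?_, fun x y => ?_⟩
  · unfold prBox
    positivity
  · simp only [sum_prBox_right]
    norm_num

lemma nonSignalling_prBox : NonSignalling (prBox c) := by
  simp only [NonSignalling, sum_prBox_right, sum_prBox_left, implies_true, and_self]

lemma corr_prBox (x y : Fin 2) : corr (prBox c) x y = outVal (!c x y) := by
  cases h : c x y <;> norm_num [corr, outVal, prBox, h]

variable {c}

lemma Smax_prBox (hc : OddParity c) : Smax (prBox c) = 4 := by
  apply le_antisymm
  · obtain ⟨c', -, hc'⟩ := exists_chsh_eq_Smax (prBox c)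
    calc Smax (prBox c) = ∑ x, ∑ y, outVal (!c' x y) * outVal (!c x y) := by
          simp only [← hc', chsh, corr_prBox]
      _ ≤ ∑ _x : Fin 2, ∑ _y : Fin 2, (1 : ℝ) :=
          sum_le_sum fun x _ => sum_le_sum fun y _ => outVal_mul_le_one _ _
      _ = 4 := by norm_num
  · calc (4 : ℝ) = chsh c (prBox c) := by norm_num [chsh, corr_prBox, outVal_mul_self]
      _ ≤ Smax (prBox c) := chsh_le_Smax _ hc

end PRBox

section Errors

variable (c : Fin 2 → Fin 2 → Bool) {P : Bool → Bool → Fin 2 → Fin 2 → ℝ}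

/-- The settings `x, y` and outcomes `a, b` of one round. -/
abbrev Round : Type := Fin 2 × Fin 2 × Bool × Bool

/-- The probability that `P` gives to a round violating `(a ^^ b) = c x y`; the other rounds get
weight `0`. -/
def errWeight (P : Bool → Bool → Fin 2 → Fin 2 → ℝ) : Round → ℝ
  | (x, y, a, b) => if (a ^^ b) = c x y then 0 else P a b x y

/-- The first party's answers in the strategy that produces the given round and satisfies
`(a ^^ b) = c x y` whenever exactly one party has its setting from that round. -/
def errAnswerA : Round → Fin 2 → Bool
  | (x, y, a, b), x' => if x' = x then a else b ^^ c x' y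

/-- The second party's answers in the strategy of `errAnswerA`. -/
def errAnswerB : Round → Fin 2 → Bool
  | (x, y, a, b), y' => if y' = y then b else a ^^ c x y'

/-- The deterministic local strategy whose only error is the given round, provided that the round is
an error and `c` has odd parity. -/
def errStrategy (r : Round) : Bool → Bool → Fin 2 → Fin 2 → ℝ :=
  deterministic (errAnswerA c r) (errAnswerB c r)

lemma errStrategy_self (a b : Bool) (x y : Fin 2) : errStrategy c (x, y, a, b) a b x y = 1 := by
  simp [errStrategy, deterministic, errAnswerA, errAnswerB]

variable {c}

lemma eq_of_xor_errAnswer_ne (hc : OddParity c) {a b : Bool} {x y x' y' : Fin 2}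
    (h : (a ^^ b) ≠ c x y)
    (h' : (errAnswerA c (x, y, a, b) x' ^^ errAnswerB c (x, y, a, b) y') ≠ c x' y') :
    x' = x ∧ y' = y := by
  by_cases hx : x' = x <;> by_cases hy : y' = y
  · exact ⟨hx, hy⟩
  · exact absurd (by simp [errAnswerA, errAnswerB, hx, hy]) h'
  · refine absurd ?_ h'
    simp [errAnswerA, errAnswerB, hx, hy, Bool.xor_comm b]
  · refine absurd ?_ h'
    have hab : (a ^^ b) = !c x y := Bool.eq_not.2 h
    have hcxy : c x' y' = (!c x y ^^ c x y' ^^ c x' y) := by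
      have hloop := hc.xor_loop hx hy
      revert hloop
      cases c x y <;> cases c x y' <;> cases c x' y <;> simp
    calc (errAnswerA c (x, y, a, b) x' ^^ errAnswerB c (x, y, a, b) y')
        = (b ^^ c x' y ^^ (a ^^ c x y')) := by simp only [errAnswerA, errAnswerB, hx, hy, if_false]
      _ = (a ^^ b ^^ c x y' ^^ c x' y) := by simp only [Bool.xor_comm, Bool.xor_left_comm]
      _ = c x' y' := by rw [hab, hcxy]

lemma errStrategy_eq_zero (hc : OddParity c) {a b a' b' : Bool} {x y x' y' : Fin 2}
    (h : (a ^^ b) ≠ c x y) (h' : (a' ^^ b') ≠ c x' y') (hne : (x', y', a', b') ≠ (x, y, a, b)) :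
    errStrategy c (x, y, a, b) a' b' x' y' = 0 := by
  by_contra h0
  obtain ⟨rfl, rfl⟩ : a' = errAnswerA c (x, y, a, b) x' ∧ b' = errAnswerB c (x, y, a, b) y' := by
    simpa [errStrategy, deterministic, and_comm] using h0
  obtain ⟨rfl, rfl⟩ := eq_of_xor_errAnswer_ne hc h h'
  simp [errAnswerA, errAnswerB] at hne

lemma sum_errWeight_mul_errStrategy (hc : OddParity c) {a b : Bool} {x y : Fin 2}
    (h : (a ^^ b) ≠ c x y) :
    ∑ r, errWeight c P r * errStrategy c r a b x y = P a b x y := by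
  rw [Fintype.sum_eq_single (x, y, a, b)]
  · simp [errWeight, errStrategy_self, h]
  · rintro ⟨x', y', a', b'⟩ hne
    by_cases h' : (a' ^^ b') = c x' y'
    · simp [errWeight, h']
    · rw [errStrategy_eq_zero hc h' h hne.symm, mul_zero]

lemma errWeight_nonneg (hP : ∀ a b x y, 0 ≤ P a b x y) : 0 ≤ errWeight c P := by
  rintro ⟨x, y, a, b⟩
  have := hP a b x y
  unfold errWeight
  positivity

lemma sum_errWeight (hP : ∀ x y, ∑ a, ∑ b, P a b x y = 1) :
    ∑ r, errWeight c P r = (4 - chsh c P) / 2 := by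
  have error_indicator (a b x y) : errWeight c P (x, y, a, b) =
      (P a b x y - outVal (!c x y) * (outVal a * outVal b * P a b x y)) / 2 := by
    cases a <;> cases b <;> cases h : c x y <;> simp [errWeight, outVal, h]
  have error_prob (x y) : ∑ a, ∑ b, errWeight c P (x, y, a, b) =
      (1 - outVal (!c x y) * corr P x y) / 2 := by
    simp only [error_indicator, corr, ← sum_div, sum_sub_distrib, hP, ← mul_sum]
  calc ∑ r, errWeight c P r = ∑ x, ∑ y, ∑ a, ∑ b, errWeight c P (x, y, a, b) := by
        simp only [Fintype.sum_prod_type]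
    _ = (4 - chsh c P) / 2 := by
        simp only [error_prob, chsh, ← sum_div, sum_sub_distrib]
        norm_num

theorem eq_sum_errStrategy_add_prBox (hc : OddParity c)
    (hP : ∀ x y, ∑ a, ∑ b, P a b x y = 1) (hNS : NonSignalling P) :
    P = ∑ r, errWeight c P r • errStrategy c r + (1 - ∑ r, errWeight c P r) • prBox c := by
  refine hNS.ext_of_error hc (nonSignallingSubmodule.add_mem
    (sum_mem fun r _ => nonSignallingSubmodule.smul_mem _ (nonSignalling_deterministic _ _))
    (nonSignallingSubmodule.smul_mem _ (nonSignalling_prBox c))) (fun x y => ?_)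
    fun a b x y h => ?_
  · simp only [hP, Pi.add_apply, Finset.sum_apply, Pi.smul_apply, smul_eq_mul, sum_add_distrib,
      sum_comm (s := (univ : Finset Bool)) (t := (univ : Finset Round)), ← mul_sum, errStrategy,
      sum_deterministic, (isBehaviour_prBox c).2, mul_one]
    ring
  · simp [sum_errWeight_mul_errStrategy hc h, prBox, h]

end Errors

theorem exists_localFree_eq_smul_add_smul_prBox {c : Fin 2 → Fin 2 → Bool} (hc : OddParity c)
    {P : Bool → Bool → Fin 2 → Fin 2 → ℝ} (hP : IsBehaviour P) (hNS : NonSignalling P) :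
    ∃ Pbar, LocalFree Pbar ∧
      P = ((4 - chsh c P) / 2) • Pbar + (1 - (4 - chsh c P) / 2) • prBox c := by
  obtain ⟨q, hq, hwq⟩ := exists_mem_stdSimplex_eq_smul (errWeight_nonneg (c := c) hP.1)
  refine ⟨∑ r, q r • errStrategy c r, localFree_sum_deterministic hq _ _, ?_⟩
  rw [← sum_errWeight hP.2]
  calc P = ∑ r, errWeight c P r • errStrategy c r + (1 - ∑ r, errWeight c P r) • prBox c :=
        eq_sum_errStrategy_add_prBox hc hP.2 hNS
    _ = (∑ r, errWeight c P r) • ∑ r, q r • errStrategy c r +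
          (1 - ∑ r, errWeight c P r) • prBox c := by
        congr 1
        rw [smul_sum]
        refine sum_congr rfl fun r _ => ?_
        rw [smul_smul]
        exact congrArg (· • errStrategy c r) (congrFun hwq r)

theorem nonsignalling_local_PR_decomposition_general (P : Bool → Bool → Fin 2 → Fin 2 → ℝ)
    (hP : IsBehaviour P) (hNS : NonSignalling P) :
    ∃ Pbar Ptil : Bool → Bool → Fin 2 → Fin 2 → ℝ,
      IsBehaviour Pbar ∧ LocalFree Pbar ∧
      IsBehaviour Ptil ∧ NonSignalling Ptil ∧ Smax Ptil = 4 ∧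
      ∀ a b x y, P a b x y = ((4 - Smax P) / 2) * Pbar a b x y +
        (1 - (4 - Smax P) / 2) * Ptil a b x y := by
  obtain ⟨c, hc, hmax⟩ := exists_chsh_eq_Smax P
  obtain ⟨Pbar, hlocal, hdecomp⟩ := exists_localFree_eq_smul_add_smul_prBox hc hP hNS
  rw [hmax] at hdecomp
  exact ⟨Pbar, prBox c, hlocal.isBehaviour, hlocal, isBehaviour_prBox c, nonSignalling_prBox c,
    Smax_prBox hc, fun a b x y => congrFun (congrFun (congrFun (congrFun hdecomp a) b) x) y⟩

theorem nonsignalling_local_PR_decomposition (P : Bool → Bool → Fin 2 → Fin 2 → ℝ)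
    (hP : IsBehaviour P) (hNS : NonSignalling P) (hS : 2 ≤ Smax P) :
    ∃ Pbar Ptil : Bool → Bool → Fin 2 → Fin 2 → ℝ,
      IsBehaviour Pbar ∧ LocalFree Pbar ∧
      IsBehaviour Ptil ∧ NonSignalling Ptil ∧ Smax Ptil = 4 ∧
      ∀ a b x y, P a b x y = ((4 - Smax P) / 2) * Pbar a b x y +
        (1 - (4 - Smax P) / 2) * Ptil a b x y :=
  nonsignalling_local_PR_decomposition_general P hP hNS
end
end

section
/- (Chained Bell inequality.) Every behaviour P with M ≥ 2 settings that admits an LHV+FHV model satisfies |Σ_{k=1}^{M} ⟨ab⟩_{k,k} + Σ_{k=1}^{M−1} ⟨ab⟩_{k+1,k} − ⟨ab⟩_{1,M}| ≤ 2M − 2, where ⟨ab⟩_{x,y} = Σ_{a,b} a·b·P(a,b|x,y). -/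
/-!
A local-free correlator table is a convex combination of products of local expectations in
`[-1, 1]`, and the chained expression is linear, so it suffices to bound it on such products. There
one induces on the number of settings: passing from settings `0, …, m` to `0, …, m + 1` adds to the
chained expression a CHSH expression, in the settings `0, m + 1` of the first party and `m, m + 1`
of the second, which is at most `2` in absolute value.
-/

open scoped BigOperators Classical
open Finset

noncomputable section

section ChainedSum

variable {R : Type*} [CommRing R]

/-- The chained Bell expression of a table of correlators, as a linear functional. There are `m + 1`
settings per party, numbered from `0`, so that the closing term needs no truncated subtraction. -/
def chainedSum (m : ℕ) : (Fin (m + 1) → Fin (m + 1) → R) →ₗ[R] R where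
  toFun E := ∑ k, E k k + ∑ k : Fin m, E k.succ k.castSucc - E 0 (Fin.last m)
  map_add' E F := by
    simp only [Pi.add_apply, sum_add_distrib]
    ring
  map_smul' c E := by
    simp only [Pi.smul_apply, smul_eq_mul, ← mul_sum, ← mul_add, ← mul_sub, RingHom.id_apply]

lemma chainedSum_apply (m : ℕ) (E : Fin (m + 1) → Fin (m + 1) → R) :
    chainedSum m E = ∑ k, E k k + ∑ k : Fin m, E k.succ k.castSucc - E 0 (Fin.last m) :=
  rfl

lemma chainedSum_succ (m : ℕ) (E : Fin (m + 2) → Fin (m + 2) → R) :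
    chainedSum (m + 1) E = chainedSum m (fun x y => E x.castSucc y.castSucc) +
      (E 0 (Fin.last m).castSucc + E (Fin.last (m + 1)) (Fin.last m).castSucc +
        E (Fin.last (m + 1)) (Fin.last (m + 1)) - E 0 (Fin.last (m + 1))) := by
  simp only [chainedSum_apply, Fin.sum_univ_castSucc (n := m + 1),
    Fin.sum_univ_castSucc (n := m) (fun k => E k.succ k.castSucc),
    Fin.succ_castSucc, Fin.succ_last, Fin.castSucc_zero]
  ring

variable [LinearOrder R] [IsStrictOrderedRing R]

lemma abs_sub_add_abs_add_le_two {b d : R} (hb : |b| ≤ 1) (hd : |d| ≤ 1) :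
    |b - d| + |b + d| ≤ 2 := by
  rw [abs_le] at hb hd
  rcases abs_cases (b - d) with h_sub | h_sub <;> rcases abs_cases (b + d) with h_add | h_add <;>
    linarith

lemma abs_chsh_le_two {a b c d : R} (ha : |a| ≤ 1) (hb : |b| ≤ 1) (hc : |c| ≤ 1) (hd : |d| ≤ 1) :
    |a * b + c * b + c * d - a * d| ≤ 2 :=
  calc |a * b + c * b + c * d - a * d| = |a * (b - d) + c * (b + d)| := by ring_nf
    _ ≤ |a| * |b - d| + |c| * |b + d| := by
      simpa only [abs_mul] using abs_add_le (a * (b - d)) (c * (b + d))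
    _ ≤ |b - d| + |b + d| :=
      add_le_add (mul_le_of_le_one_left (abs_nonneg _) ha)
        (mul_le_of_le_one_left (abs_nonneg _) hc)
    _ ≤ 2 := abs_sub_add_abs_add_le_two hb hd

lemma abs_chainedSum_mul_le {m : ℕ} {α β : Fin (m + 1) → R}
    (hα : ∀ x, |α x| ≤ 1) (hβ : ∀ y, |β y| ≤ 1) :
    |chainedSum m (fun x y => α x * β y)| ≤ 2 * m := by
  induction m with
  | zero => simp [chainedSum_apply]
  | succ m ih =>
    rw [chainedSum_succ]
    have h_prev := ih (fun x => hα x.castSucc) (fun y => hβ y.castSucc)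
    have h_chsh := abs_chsh_le_two (hα 0) (hβ (Fin.last m).castSucc)
      (hα (Fin.last (m + 1))) (hβ (Fin.last (m + 1)))
    refine (abs_add_le _ _).trans ((add_le_add h_prev h_chsh).trans_eq ?_)
    push_cast
    ring

end ChainedSum

section LocalCorrelators

/-- The expectation of a `±1`-valued outcome distributed according to `p`. -/
def outcomeMean (p : Bool → ℝ) : ℝ := ∑ a, outVal a * p a

lemma abs_outVal (a : Bool) : |outVal a| = 1 := by
  cases a <;> simp [outVal]

lemma abs_outcomeMean_le_one {p : Bool → ℝ} (hp : ∀ a, 0 ≤ p a) (hp_sum : ∑ a, p a = 1) :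
    |outcomeMean p| ≤ 1 :=
  calc |outcomeMean p| ≤ ∑ a, |outVal a * p a| := abs_sum_le_sum_abs _ _
    _ = ∑ a, p a := by simp only [abs_mul, abs_outVal, one_mul, abs_of_nonneg (hp _)]
    _ = 1 := hp_sum

/-- The correlator tables of uncorrelated parties: products of local expectations in `[-1, 1]`. -/
def productCorrelators (ι κ : Type*) : Set (ι → κ → ℝ) :=
  {E | ∃ (α : ι → ℝ) (β : κ → ℝ), (∀ x, |α x| ≤ 1) ∧ (∀ y, |β y| ≤ 1) ∧ E = fun x y => α x * β y}

variable {M N : ℕ}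

lemma corr_sum_mul {Λ : Type*} [Fintype Λ] (q : Λ → ℝ) (A : Bool → Fin M → Λ → ℝ)
    (B : Bool → Fin N → Λ → ℝ) :
    corr (fun a b x y => ∑ l, q l * A a x l * B b y l) =
      ∑ l, q l • fun x y => outcomeMean (A · x l) * outcomeMean (B · y l) := by
  ext x y
  simp only [corr, outcomeMean, Fintype.sum_bool, mul_sum, ← sum_add_distrib, Finset.sum_apply,
    Pi.smul_apply, smul_eq_mul]
  exact sum_congr rfl fun l _ => by ring

lemma LocalFree.corr_mem_convexHull {P : Bool → Bool → Fin M → Fin N → ℝ} (hP : LocalFree P) :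
    corr P ∈ convexHull ℝ (productCorrelators (Fin M) (Fin N)) := by
  obtain ⟨n, q, A, B, hq, hq_sum, hA, hA_sum, hB, hB_sum, hPAB⟩ := hP
  obtain rfl : P = fun a b x y => ∑ l, q l * A a x l * B b y l := by
    funext a b x y
    exact hPAB a b x y
  rw [corr_sum_mul]
  refine (convex_convexHull ℝ _).sum_mem (fun l _ => hq l) hq_sum fun l _ => ?_
  exact subset_convexHull ℝ _ ⟨_, _, fun x => abs_outcomeMean_le_one (hA · x l) (hA_sum x l),
    fun y => abs_outcomeMean_le_one (hB · y l) (hB_sum y l), rfl⟩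

lemma abs_chainedSum_le_of_mem_convexHull {m : ℕ} {E : Fin (m + 1) → Fin (m + 1) → ℝ}
    (hE : E ∈ convexHull ℝ (productCorrelators (Fin (m + 1)) (Fin (m + 1)))) :
    |chainedSum m E| ≤ 2 * m := by
  have h_convex : Convex ℝ (chainedSum m ⁻¹' Set.Icc (-(2 * m : ℝ)) (2 * m)) :=
    (convex_Icc _ _).linear_preimage _
  refine abs_le.mpr (convexHull_min ?_ h_convex hE)
  rintro _ ⟨α, β, hα, hβ, rfl⟩
  exact abs_le.mp (abs_chainedSum_mul_le hα hβ)

end LocalCorrelators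

theorem chained_Bell_inequality (M : ℕ) (hM : 2 ≤ M)
    (P : Bool → Bool → Fin M → Fin M → ℝ)
    (hP : IsBehaviour P) (hLF : LocalFree P) :
    |(∑ k : Fin M, corr P k k) +
      (∑ k : Fin (M - 1),
        corr P ⟨k.1 + 1, by have := k.isLt; omega⟩ ⟨k.1, by have := k.isLt; omega⟩) -
      corr P ⟨0, by omega⟩ ⟨M - 1, by omega⟩| ≤ 2 * (M : ℝ) - 2 := by
  obtain ⟨m, rfl⟩ : ∃ m, M = m + 1 := ⟨M - 1, by omega⟩
  have h_chain : |chainedSum m (corr P)| ≤ 2 * m :=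
    abs_chainedSum_le_of_mem_convexHull hLF.corr_mem_convexHull
  have h_bound : 2 * ((m + 1 : ℕ) : ℝ) - 2 = 2 * m := by push_cast; ring
  rw [h_bound]
  -- With `M = m + 1`, the truncated `M - 1` is definitionally `m`.
  exact h_chain
end
end
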